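/- arXiv:1106.5244 — 6 statements merged into one kernel-verified Lean document; each statement's English description precedes it below -/
import Mathlib

section
/- Let f : ℂ → ℂ be holomorphic on the punctured open unit disk 𝔻 ∖ {0}. Then the function z ↦ ‖f z‖² is locally integrable on 𝔻 with respect to the two-dimensional Lebesgue measure (i.e. integrable on every compact subset of 𝔻) if and only if there exists a function g holomorphic on the whole open unit disk 𝔻 with g z = f z for all z ∈ 𝔻 ∖ {0}. -/
open MeasureTheory Metric

/-!
If `f` is holomorphic near `c` except at `c`, then for `z` close to `c` it is holomorphic on the
ball `B` of centre `z` and radius `r = ‖z - c‖`. The area mean value inequality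
`‖f z‖ * vol B ≤ ∫_B ‖f‖` and Hölder's inequality give `‖f z‖ * r ^ (2 / p) ≤ ‖f‖_{L^p(B)}`, and the
right-hand side tends to `0` by absolute continuity of the integral, since `vol B → 0`. For `p = 2`
this is `f z = o((z - c)⁻¹)`, which is exactly the hypothesis of the removable singularity theorem.
The case `2 < p` reduces to `p = 2` because compact sets have finite measure.
-/

open Asymptotics Filter Function Real Set Topology
open scoped ENNReal

theorem lintegral_eq_lintegral_circleMap {F : ℂ → ℝ≥0∞} (hF : Measurable F) (c : ℂ) :
    ∫⁻ w, F w =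
      ∫⁻ r in Ioi (0 : ℝ), ENNReal.ofReal r * ∫⁻ θ in Ioo (-π) π, F (circleMap c r θ) := by
  have circleMap_eq (p : ℝ × ℝ) : c + Complex.polarCoord.symm p = circleMap c p.1 p.2 := by
    simp [circleMap, Complex.exp_mul_I]
  have measurable_circleMap : Measurable fun p : ℝ × ℝ => circleMap c p.1 p.2 := by
    unfold circleMap
    fun_prop
  rw [← lintegral_add_left_eq_self F c,
    ← Complex.lintegral_comp_polarCoord_symm fun w => F (c + w)]
  simp_rw [circleMap_eq, smul_eq_mul]
  rw [polarCoord_target, Measure.volume_eq_prod, ← Measure.prod_restrict,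
    lintegral_prod _ (by fun_prop)]
  simp_rw [lintegral_const_mul' _ _ ENNReal.ofReal_ne_top]

theorem setLIntegral_ball_eq_lintegral_circleMap {F : ℂ → ℝ≥0∞} (hF : Measurable F)
    (c : ℂ) (R : ℝ) :
    ∫⁻ w in ball c R, F w =
      ∫⁻ r in Ioo 0 R, ENNReal.ofReal r * ∫⁻ θ in Ioo (-π) π, F (circleMap c r θ) := by
  rw [← lintegral_indicator measurableSet_ball,
    lintegral_eq_lintegral_circleMap (hF.indicator measurableSet_ball) c,
    ← Ioi_inter_Iio (a := (0 : ℝ)), inter_comm, ← setLIntegral_indicator measurableSet_Iio]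
  refine setLIntegral_congr_fun measurableSet_Ioi fun r (hr : 0 < r) => ?_
  by_cases hrR : r < R <;> simp [indicator, circleMap, abs_of_pos hr, hrR]

theorem mul_volume_ball_le_setLIntegral_ball {F : ℂ → ℝ≥0∞} (hF : Measurable F) {c : ℂ} {R : ℝ}
    {a : ℝ≥0∞}
    (ha : ∀ r ∈ Ioo 0 R, ENNReal.ofReal (2 * π) * a ≤ ∫⁻ θ in Ioo (-π) π, F (circleMap c r θ)) :
    a * volume (ball c R) ≤ ∫⁻ w in ball c R, F w := by
  rw [← setLIntegral_const, setLIntegral_ball_eq_lintegral_circleMap measurable_const,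
    setLIntegral_ball_eq_lintegral_circleMap hF]
  refine setLIntegral_mono' measurableSet_Ioo fun r hr => ?_
  rw [setLIntegral_const, Real.volume_Ioo, mul_comm a, sub_neg_eq_add, ← two_mul]
  gcongr
  exact ha r hr

theorem ofReal_two_pi_mul_enorm_circleAverage_le {E : Type*} [NormedAddCommGroup E]
    [NormedSpace ℝ E] (f : ℂ → E) (c : ℂ) (R : ℝ) :
    ENNReal.ofReal (2 * π) * ‖circleAverage f c R‖ₑ ≤
      ∫⁻ θ in Ioo (-π) π, ‖f (circleMap c R θ)‖ₑ := by
  have integral_eq : ∫ θ in Ioo (-π) π, f (circleMap c R θ) = (2 * π) • circleAverage f c R := by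
    rw [circleAverage_eq_integral_add (-π), smul_inv_smul₀ two_pi_pos.ne',
      intervalIntegral.integral_comp_add_right fun θ => f (circleMap c R θ), zero_add,
      intervalIntegral.integral_of_le (by linarith [pi_pos]), integral_Ioc_eq_integral_Ioo]
    ring_nf
  calc ENNReal.ofReal (2 * π) * ‖circleAverage f c R‖ₑ
      = ‖∫ θ in Ioo (-π) π, f (circleMap c R θ)‖ₑ := by
        rw [integral_eq, enorm_smul, Real.enorm_of_nonneg two_pi_pos.le]
    _ ≤ ∫⁻ θ in Ioo (-π) π, ‖f (circleMap c R θ)‖ₑ := enorm_integral_le_lintegral_enorm _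

section MeanValue

variable {E : Type*} [NormedAddCommGroup E] [NormedSpace ℂ E] [CompleteSpace E]
  {f : ℂ → E} {c : ℂ} {R : ℝ}

theorem enorm_mul_volume_ball_le_setLIntegral_enorm (hf : DifferentiableOn ℂ f (ball c R)) :
    ‖f c‖ₑ * volume (ball c R) ≤ ∫⁻ w in ball c R, ‖f w‖ₑ := by
  have measurable_indicator : Measurable ((ball c R).indicator fun w => ‖f w‖ₑ) := by
    classical
    rw [← piecewise_eq_indicator]
    exact hf.continuousOn.enorm.measurable_piecewise continuousOn_const measurableSet_ball
  rw [← setLIntegral_congr_fun (f := (ball c R).indicator fun w => ‖f w‖ₑ) measurableSet_ball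
    fun w hw => indicator_of_mem hw _]
  refine mul_volume_ball_le_setLIntegral_ball measurable_indicator fun r ⟨hr, hrR⟩ => ?_
  have mean_value : circleAverage f c r = f c := by
    refine DiffContOnCl.circleAverage (hf.diffContOnCl_ball ?_)
    rw [abs_of_pos hr]
    exact closedBall_subset_ball hrR
  have circleMap_mem (θ : ℝ) : circleMap c r θ ∈ ball c R :=
    closedBall_subset_ball hrR (circleMap_mem_closedBall c hr.le θ)
  simpa only [mean_value, indicator_of_mem (circleMap_mem _)] using
    ofReal_two_pi_mul_enorm_circleAverage_le f c r

theorem enorm_mul_volume_ball_rpow_le_eLpNorm (hR : 0 < R)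
    (hf : DifferentiableOn ℂ f (ball c R)) {p : ℝ≥0∞} (hp : 1 ≤ p) :
    ‖f c‖ₑ * volume (ball c R) ^ (1 / p.toReal) ≤ eLpNorm f p (volume.restrict (ball c R)) := by
  set V := volume (ball c R)
  have V_ne_zero : V ≠ 0 := (measure_ball_pos volume c hR).ne'
  have V_ne_top : V ≠ ∞ := measure_ball_lt_top.ne
  have rpow_mul_rpow : V ^ (1 / p.toReal) * V ^ (1 - 1 / p.toReal) = V := by
    rw [← ENNReal.rpow_add _ _ V_ne_zero V_ne_top, add_sub_cancel, ENNReal.rpow_one]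
  have holder := eLpNorm_le_eLpNorm_mul_rpow_measure_univ hp
    (hf.continuousOn.aestronglyMeasurable (μ := volume) measurableSet_ball)
  rw [ENNReal.toReal_one, div_one, Measure.restrict_apply_univ, eLpNorm_one_eq_lintegral_enorm]
    at holder
  refine (ENNReal.mul_le_mul_iff_left (c := V ^ (1 - 1 / p.toReal)) ?_ ?_).mp ?_
  · exact (ENNReal.rpow_pos (pos_iff_ne_zero.mpr V_ne_zero) V_ne_top).ne'
  · exact ENNReal.rpow_ne_top_of_ne_zero V_ne_zero V_ne_top
  · rw [mul_assoc, rpow_mul_rpow]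
    exact (enorm_mul_volume_ball_le_setLIntegral_enorm hf).trans holder

theorem ofReal_norm_mul_rpow_le_eLpNorm (hR : 0 < R) (hf : DifferentiableOn ℂ f (ball c R))
    {p : ℝ≥0∞} (hp : 1 ≤ p) :
    ENNReal.ofReal (‖f c‖ * R ^ (2 / p.toReal)) ≤
      eLpNorm f p (volume.restrict (ball c R)) := by
  have sq_le_volume : ENNReal.ofReal R ^ (2 : ℝ) ≤ volume (ball c R) := by
    rw [Complex.volume_ball, ENNReal.rpow_two]
    exact le_mul_of_one_le_right' (mod_cast (one_lt_two.trans_le two_le_pi).le)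
  calc ENNReal.ofReal (‖f c‖ * R ^ (2 / p.toReal))
      = ‖f c‖ₑ * (ENNReal.ofReal R ^ (2 : ℝ)) ^ (1 / p.toReal) := by
        rw [ENNReal.ofReal_mul (norm_nonneg _), ofReal_norm, ← ENNReal.rpow_mul,
          ENNReal.ofReal_rpow_of_pos hR, mul_one_div]
    _ ≤ ‖f c‖ₑ * volume (ball c R) ^ (1 / p.toReal) := by gcongr
    _ ≤ eLpNorm f p (volume.restrict (ball c R)) :=
        enorm_mul_volume_ball_rpow_le_eLpNorm hR hf hp

end MeanValue

theorem tendsto_eLpNorm_restrict_zero {α ι E : Type*} [MeasurableSpace α] {μ : Measure α}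
    [NormedAddCommGroup E] {f : α → E} {p : ℝ≥0∞} (hp : p ≠ ∞) (hf : eLpNorm f p μ ≠ ∞)
    {l : Filter ι} {s : ι → Set α} (hs : Tendsto (fun i => μ (s i)) l (𝓝 0)) :
    Tendsto (fun i => eLpNorm f p (μ.restrict (s i))) l (𝓝 0) := by
  rcases eq_or_ne p 0 with rfl | hp0
  · simp only [eLpNorm_exponent_zero, tendsto_const_nhds]
  have lintegral_finite : ∫⁻ x, ‖f x‖ₑ ^ p.toReal ∂μ ≠ ∞ :=
    ((eLpNorm_lt_top_iff_lintegral_rpow_enorm_lt_top hp0 hp).mp hf.lt_top).ne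
  have exponent_pos : 0 < 1 / p.toReal := one_div_pos.mpr (ENNReal.toReal_pos hp0 hp)
  simpa only [eLpNorm_eq_lintegral_rpow_enorm_toReal hp0 hp,
    ENNReal.zero_rpow_of_pos exponent_pos] using
    (tendsto_setLIntegral_zero lintegral_finite hs).ennrpow_const (1 / p.toReal)

theorem tendsto_volume_ball_norm_sub (c : ℂ) :
    Tendsto (fun z => volume (ball z ‖z - c‖)) (𝓝 c) (𝓝 0) := by
  simp_rw [Complex.volume_ball]
  have continuous_volume :
      Continuous fun z : ℂ => ENNReal.ofReal ‖z - c‖ ^ 2 * (NNReal.pi : ℝ≥0∞) :=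
    (ENNReal.continuous_mul_const ENNReal.coe_ne_top).comp ((ENNReal.continuous_pow 2).comp
      (ENNReal.continuous_ofReal.comp (by fun_prop)))
  simpa using continuous_volume.tendsto c

theorem eventually_ball_norm_sub_subset {E : Type*} [SeminormedAddCommGroup E] {s : Set E} {c : E}
    (hs : s ∈ 𝓝 c) : ∀ᶠ z in 𝓝 c, ball z ‖z - c‖ ⊆ s \ {c} := by
  obtain ⟨ε, ε_pos, ball_subset⟩ := Metric.mem_nhds_iff.mp hs
  filter_upwards [ball_mem_nhds c (half_pos ε_pos)] with z hz w hw
  rw [← dist_eq_norm] at hw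
  refine ⟨ball_subset ?_, ?_⟩
  · rw [mem_ball] at *
    linarith [dist_triangle w z c]
  · rintro rfl
    exact (mem_ball'.mp hw).false

section PuncturedNeighbourhood

variable {E : Type*} [NormedAddCommGroup E] [NormedSpace ℂ E] [CompleteSpace E]
  {f : ℂ → E} {s : Set ℂ} {c : ℂ} {p : ℝ≥0∞}

theorem isLittleO_norm_sub_rpow_of_memLp (hs : s ∈ 𝓝 c)
    (hd : DifferentiableOn ℂ f (s \ {c})) (hp : 1 ≤ p) (hp_top : p ≠ ∞)
    (hf : MemLp f p (volume.restrict s)) :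
    f =o[𝓝[≠] c] fun z => ‖z - c‖ ^ (-(2 / p.toReal)) := by
  have eLpNorm_tendsto :
      Tendsto (fun z => eLpNorm f p ((volume.restrict s).restrict (ball z ‖z - c‖)))
        (𝓝 c) (𝓝 0) :=
    tendsto_eLpNorm_restrict_zero hp_top hf.eLpNorm_ne_top <|
      tendsto_of_tendsto_of_tendsto_of_le_of_le tendsto_const_nhds
        (tendsto_volume_ball_norm_sub c) (fun _ => zero_le) fun _ => Measure.restrict_apply_le _ _
  refine isLittleO_iff.mpr fun ε ε_pos => ?_
  filter_upwards [nhdsWithin_le_nhds (eLpNorm_tendsto.eventually_le_const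
      (ENNReal.ofReal_pos.mpr ε_pos)),
    nhdsWithin_le_nhds (eventually_ball_norm_sub_subset hs), self_mem_nhdsWithin]
    with z eLpNorm_le ball_subset hz
  have norm_pos : 0 < ‖z - c‖ := norm_sub_pos_iff.mpr hz
  rw [Measure.restrict_restrict measurableSet_ball,
    inter_eq_self_of_subset_left (ball_subset.trans sdiff_subset)] at eLpNorm_le
  have norm_mul_le : ‖f z‖ * ‖z - c‖ ^ (2 / p.toReal) ≤ ε :=
    (ENNReal.ofReal_le_ofReal_iff ε_pos.le).mp <|
      (ofReal_norm_mul_rpow_le_eLpNorm norm_pos (hd.mono ball_subset) hp).trans eLpNorm_le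
  rwa [Real.norm_of_nonneg (by positivity), rpow_neg norm_pos.le, ← div_eq_mul_inv,
    le_div_iff₀ (by positivity)]

theorem differentiableOn_update_limUnder_of_memLp_two (hs : s ∈ 𝓝 c)
    (hd : DifferentiableOn ℂ f (s \ {c})) (hf : MemLp f 2 (volume.restrict s)) :
    DifferentiableOn ℂ (update f c (limUnder (𝓝[≠] c) f)) s := by
  have isLittleO_inv : f =o[𝓝[≠] c] fun z => (z - c)⁻¹ := by
    simpa [rpow_neg_one, ← norm_inv] using
      isLittleO_norm_sub_rpow_of_memLp hs hd one_le_two ENNReal.ofNat_ne_top hf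
  -- The removable singularity criterion subtracts `f c`, which is an arbitrary value here.
  have const_isLittleO_inv : (fun _ => f c) =o[𝓝[≠] c] fun z => (z - c)⁻¹ :=
    IsBoundedUnder.isLittleO_sub_self_inv isBoundedUnder_const
  exact Complex.differentiableOn_update_limUnder_of_isLittleO hs hd
    (isLittleO_inv.sub const_isLittleO_inv)

end PuncturedNeighbourhood

theorem aestronglyMeasurable_restrict_of_continuousOn_sdiff_singleton {α β : Type*}
    [TopologicalSpace α] [T1Space α] [MeasurableSpace α] [BorelSpace α] [TopologicalSpace β]
    [TopologicalSpace.PseudoMetrizableSpace β] [SecondCountableTopologyEither α β]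
    {μ : Measure α} [NullSingletonClass μ] {f : α → β} {s : Set α} {c : α}
    (hf : ContinuousOn f (s \ {c})) (hs : MeasurableSet s) :
    AEStronglyMeasurable f (μ.restrict s) := by
  rw [← Measure.restrict_congr_set (sdiff_null_ae_eq_self (measure_singleton c))]
  exact hf.aestronglyMeasurable (hs.diff (measurableSet_singleton c))

theorem memLp_restrict_of_continuousOn_of_isCompact {α E : Type*} [TopologicalSpace α]
    [MeasurableSpace α] [OpensMeasurableSpace α] [NormedAddCommGroup E]
    [SecondCountableTopologyEither α E] {μ : Measure α} [IsFiniteMeasureOnCompacts μ]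
    {f : α → E} {K : Set α}
    (hf : ContinuousOn f K) (hK : IsCompact K) (hKm : MeasurableSet K) (p : ℝ≥0∞) :
    MemLp f p (μ.restrict K) := by
  have : IsFiniteMeasure (μ.restrict K) := isFiniteMeasure_restrict.mpr hK.measure_lt_top.ne
  obtain ⟨C, norm_le⟩ := hK.exists_bound_of_continuousOn hf
  exact .of_bound (hf.aestronglyMeasurable hKm) C
    ((ae_restrict_iff' hKm).mpr (.of_forall norm_le))

theorem integrableOn_norm_sq_iff_memLp_two_of_continuousOn_sdiff_singleton {α E : Type*}
    [TopologicalSpace α] [T1Space α] [MeasurableSpace α] [BorelSpace α] [NormedAddCommGroup E]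
    [SecondCountableTopologyEither α E] {μ : Measure α} [NullSingletonClass μ] {f : α → E}
    {s : Set α} {c : α} (hf : ContinuousOn f (s \ {c})) (hs : MeasurableSet s) :
    IntegrableOn (fun x => ‖f x‖ ^ 2) s μ ↔ MemLp f 2 (μ.restrict s) :=
  (memLp_two_iff_integrable_sq_norm
    (aestronglyMeasurable_restrict_of_continuousOn_sdiff_singleton hf hs)).symm

theorem stmt_0_general {E : Type*} [NormedAddCommGroup E] [NormedSpace ℂ E] [CompleteSpace E]
    {U : Set ℂ} (hU : IsOpen U) {c : ℂ} (hc : c ∈ U) {p : ℝ≥0∞} (hp : 2 ≤ p) (f : ℂ → E)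
    (hf : ∀ z ∈ U \ {c}, DifferentiableAt ℂ f z) :
    (∀ K ⊆ U, IsCompact K → MemLp f p (volume.restrict K)) ↔
      ∃ g : ℂ → E, (∀ z ∈ U, DifferentiableAt ℂ g z) ∧ ∀ z ∈ U \ {c}, g z = f z := by
  constructor
  · intro memLp
    obtain ⟨K, hKc, hKU, hK⟩ := local_compact_nhds (hU.mem_nhds hc)
    have : IsFiniteMeasure (volume.restrict K) := isFiniteMeasure_restrict.mpr hK.measure_lt_top.ne
    have diffK := differentiableOn_update_limUnder_of_memLp_two hKc
      (fun z hz => (hf z ⟨hKU hz.1, hz.2⟩).differentiableWithinAt)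
      ((memLp K hKU hK).mono_exponent hp)
    refine ⟨update f c (limUnder (𝓝[≠] c) f), fun z hz => ?_, fun z hz => update_of_ne hz.2 _ _⟩
    rcases eq_or_ne z c with rfl | hzc
    · exact diffK.differentiableAt hKc
    · exact (hf z ⟨hz, hzc⟩).congr_of_eventuallyEq <|
        (eventually_ne_nhds hzc).mono fun w hw => update_of_ne hw _ _
  · rintro ⟨g, hg, hgf⟩ K hKU hK
    have g_eq_f : g =ᵐ[volume.restrict K] f := by
      filter_upwards [ae_restrict_mem hK.measurableSet, ae_restrict_of_ae (Measure.ae_ne volume c)]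
        with z hzK hzc using hgf z ⟨hKU hzK, hzc⟩
    have g_cont : ContinuousOn g K := fun z hz => (hg z (hKU hz)).continuousAt.continuousWithinAt
    exact (memLp_congr_ae g_eq_f).mp
      (memLp_restrict_of_continuousOn_of_isCompact g_cont hK hK.measurableSet p)

/-- A function holomorphic on the punctured unit disk has `‖f‖²` integrable on every
compact subset of the disk iff it extends holomorphically across the origin. -/
theorem stmt_0 (f : ℂ → ℂ)
    (hf : ∀ z ∈ ball (0 : ℂ) 1 \ {0}, DifferentiableAt ℂ f z) :
    (∀ K ⊆ ball (0 : ℂ) 1, IsCompact K →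
        IntegrableOn (fun z : ℂ => ‖f z‖ ^ 2) K volume) ↔
      ∃ g : ℂ → ℂ, (∀ z ∈ ball (0 : ℂ) 1, DifferentiableAt ℂ g z) ∧
        ∀ z ∈ ball (0 : ℂ) 1 \ {0}, g z = f z :=
  (forall₃_congr fun _ hK hKc =>
      integrableOn_norm_sq_iff_memLp_two_of_continuousOn_sdiff_singleton (c := 0)
        (fun z hz => (hf z ⟨hK hz.1, hz.2⟩).continuousAt.continuousWithinAt)
        hKc.measurableSet).trans
    (stmt_0_general isOpen_ball (mem_ball_self one_pos) le_rfl f hf)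
end

section
/- Let ℓ > 0 and c ∈ ℝ, and let F : ℂ → ℂ be a measurable function. Set S = {z ∈ ℂ : 0 < Re z < ℓ and Im z > c} and A = {w ∈ ℂ : 0 < ‖w‖ < exp(−2πc/ℓ)}. Then, as an identity of Lebesgue integrals with values in [0,∞], ∫_S ‖F(exp(2πi z/ℓ))‖² dλ(z) = (ℓ/(2π))² · ∫_A ‖F(w)‖² · ‖w‖⁻² dλ(w), where λ is the two-dimensional Lebesgue measure on ℂ. -/
open MeasureTheory Real

open Set Function.Periodic
open scoped ENNReal

/-!
The map `w = exp (2πiz/ℓ)` is a bijection from each strip `a ≤ Re z < a + ℓ` onto `ℂ ∖ {0}`. As it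
is holomorphic, its real Jacobian determinant is `|dw/dz|² = (2π/ℓ)² |w|²`, which the weight
`|w|⁻²` cancels up to the constant. The condition `Im z > c` only bounds `|w|`, and opening the
strip on the left removes a null line.
-/

theorem det_restrictScalars_toSpanSingleton (a : ℂ) :
    ((ContinuousLinearMap.toSpanSingleton ℂ a).restrictScalars ℝ).det = ‖a‖ ^ 2 := by
  simp [ContinuousLinearMap.det, LinearMap.det_restrictScalars, Algebra.norm_complex_eq,
    Complex.normSq_eq_norm_sq]

theorem lintegral_image_eq_lintegral_norm_deriv_sq_mul {s : Set ℂ} {f f' : ℂ → ℂ}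
    (hs : MeasurableSet s) (hf' : ∀ z ∈ s, HasDerivWithinAt f (f' z) s z) (hf : InjOn f s)
    (g : ℂ → ℝ≥0∞) :
    ∫⁻ w in f '' s, g w = ∫⁻ z in s, ENNReal.ofReal (‖f' z‖ ^ 2) * g (f z) := by
  simpa only [det_restrictScalars_toSpanSingleton, abs_sq, abs_pow, abs_norm] using
    lintegral_image_eq_lintegral_abs_det_fderiv_mul volume hs
      (fun z hz ↦ (hf' z hz).hasFDerivWithinAt.restrictScalars ℝ) hf g

theorem quasiMeasurePreserving_re :
    Measure.QuasiMeasurePreserving Complex.re volume volume :=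
  Measure.quasiMeasurePreserving_fst.comp
    Complex.volume_preserving_equiv_real_prod.quasiMeasurePreserving

section qParam

variable {h : ℝ}

theorem qParam_eq_qParam_iff (hh : h ≠ 0) {x y : ℂ} :
    qParam h x = qParam h y ↔ ∃ n : ℤ, x = y + n • (h : ℂ) := by
  have hhc : (h : ℂ) ≠ 0 := Complex.ofReal_ne_zero.mpr hh
  simp only [qParam, Complex.exp_eq_exp_iff_exists_int, zsmul_eq_mul]
  refine exists_congr fun n ↦ ?_
  calc 2 * π * Complex.I * x / h = 2 * π * Complex.I * y / h + n * (2 * π * Complex.I)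
      ↔ 2 * π * Complex.I * x = 2 * π * Complex.I * (y + n * h) := by
        rw [div_eq_iff hhc, add_mul, div_mul_cancel₀ _ hhc]; ring_nf
    _ ↔ x = y + n * h := mul_right_inj' Complex.two_pi_I_ne_zero

theorem norm_deriv_qParam (z : ℂ) :
    ‖deriv (qParam h) z‖ = 2 * π / |h| * ‖qParam h z‖ := by
  have hlog := ModularForm.logDeriv_qParam h z
  rw [logDeriv_apply, div_eq_iff (qParam_ne_zero z)] at hlog
  simp [hlog, abs_of_pos pi_pos]

theorem bijOn_qParam_strip (hh : 0 < h) (a : ℝ) :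
    BijOn (qParam h) (Complex.re ⁻¹' Ico a (a + h)) {0}ᶜ := by
  refine ⟨fun z _ ↦ qParam_ne_zero z, fun x hx y hy hxy ↦ ?_, fun w hw ↦ ?_⟩
  · obtain ⟨n, rfl⟩ := (qParam_eq_qParam_iff hh.ne').mp hxy
    have hn : n = 0 := (existsUnique_add_zsmul_mem_Ico hh y.re a).unique
      (by simpa using hx) (by simpa using hy)
    simp [hn]
  · obtain ⟨n, hn, -⟩ := existsUnique_add_zsmul_mem_Ico hh (invQParam h w).re a
    refine ⟨invQParam h w + n • (h : ℂ), by simpa using hn, ?_⟩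
    rw [(qParam_eq_qParam_iff hh.ne').mpr ⟨n, rfl⟩, qParam_right_inv hh.ne' hw]

theorem setLIntegral_comp_qParam (hh : 0 < h) (a : ℝ) {t : Set ℂ} (ht : MeasurableSet t)
    (g : ℂ → ℝ≥0∞) :
    ∫⁻ z in Complex.re ⁻¹' Ico a (a + h) ∩ qParam h ⁻¹' t, g (qParam h z) =
      ENNReal.ofReal ((h / (2 * π)) ^ 2) * ∫⁻ w in t, g w * ENNReal.ofReal (‖w‖⁻¹ ^ 2) := by
  set s := Complex.re ⁻¹' Ico a (a + h) ∩ qParam h ⁻¹' t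
  have hs : MeasurableSet s := (Complex.measurable_re measurableSet_Ico).inter
    (continuous_qParam.measurable ht)
  have himage : qParam h '' s =ᵐ[volume] t := by
    rw [image_inter_preimage, (bijOn_qParam_strip hh a).image_eq, inter_comm]
    exact inter_ae_eq_left_of_ae_eq_univ (ae_eq_univ.mpr (by simp))
  have hweight (z : ℂ) :
      (h / (2 * π)) ^ 2 * (‖deriv (qParam h) z‖ ^ 2 * ‖qParam h z‖⁻¹ ^ 2) = 1 := by
    have hq : ‖qParam h z‖ ≠ 0 := norm_ne_zero_iff.mpr (qParam_ne_zero z)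
    rw [norm_deriv_qParam, mul_pow, div_pow _ |h|, sq_abs]
    field_simp
  rw [← setLIntegral_congr himage, lintegral_image_eq_lintegral_norm_deriv_sq_mul hs
      (fun z _ ↦ (differentiable_qParam z).hasDerivAt.hasDerivWithinAt)
      ((bijOn_qParam_strip hh a).injOn.mono inter_subset_left),
    ← lintegral_const_mul' _ _ ENNReal.ofReal_ne_top]
  refine lintegral_congr fun z ↦ ?_
  rw [mul_left_comm (ENNReal.ofReal _) (g _), mul_left_comm, ← ENNReal.ofReal_mul (sq_nonneg _),
    ← ENNReal.ofReal_mul (sq_nonneg _), hweight, ENNReal.ofReal_one, mul_one]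

end qParam

theorem stmt_1_general {ℓ : ℝ} (hℓ : 0 < ℓ) (a c : ℝ) (g : ℂ → ℝ≥0∞) :
    ∫⁻ z in {z : ℂ | a < z.re ∧ z.re < a + ℓ ∧ c < z.im}, g (qParam ℓ z) =
      ENNReal.ofReal ((ℓ / (2 * π)) ^ 2) *
        ∫⁻ w in {w : ℂ | 0 < ‖w‖ ∧ ‖w‖ < Real.exp (-(2 * π * c) / ℓ)},
          g w * ENNReal.ofReal (‖w‖⁻¹ ^ 2) := by
  set A := {w : ℂ | 0 < ‖w‖ ∧ ‖w‖ < Real.exp (-(2 * π * c) / ℓ)}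
  have hA : MeasurableSet A := measurable_norm measurableSet_Ioo
  have hpreimage : qParam ℓ ⁻¹' A = {z | c < z.im} := by
    ext z
    simp [A, qParam_ne_zero, ← norm_qParam_lt_iff hℓ c z]
  have hstrip : {z : ℂ | a < z.re ∧ z.re < a + ℓ ∧ c < z.im} =
      Complex.re ⁻¹' Ioo a (a + ℓ) ∩ qParam ℓ ⁻¹' A := by
    ext z
    simp [hpreimage, and_assoc]
  have hstrip_ae : (Complex.re ⁻¹' Ioo a (a + ℓ) ∩ qParam ℓ ⁻¹' A : Set ℂ) =ᵐ[volume]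
      (Complex.re ⁻¹' Ico a (a + ℓ) ∩ qParam ℓ ⁻¹' A : Set ℂ) :=
    (quasiMeasurePreserving_re.preimage_ae_eq Ioo_ae_eq_Ico).inter (ae_eq_refl _)
  rw [hstrip, setLIntegral_congr hstrip_ae, setLIntegral_comp_qParam hℓ a hA]

/-- Change of variables `w = exp(2πiz/ℓ)` mapping the half-strip
`S = {0 < Re z < ℓ, Im z > c}` onto the punctured disk
`A = {0 < ‖w‖ < exp(-2πc/ℓ)}`, as an identity of Lebesgue integrals in `[0,∞]`. -/
theorem stmt_1 (ℓ c : ℝ) (hℓ : 0 < ℓ) (F : ℂ → ℂ) (hF : Measurable F) :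
    ∫⁻ z in {z : ℂ | 0 < z.re ∧ z.re < ℓ ∧ c < z.im},
        ENNReal.ofReal (‖F (Complex.exp (2 * (π : ℂ) * Complex.I * z / (ℓ : ℂ)))‖ ^ 2) ∂volume
      = ENNReal.ofReal ((ℓ / (2 * π)) ^ 2) *
        ∫⁻ w in {w : ℂ | 0 < ‖w‖ ∧ ‖w‖ < Real.exp (-(2 * π * c) / ℓ)},
          ENNReal.ofReal (‖F w‖ ^ 2 * ‖w‖⁻¹ ^ 2) ∂volume := by
  simpa only [zero_add, ENNReal.ofReal_mul (sq_nonneg _), qParam] using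
    stmt_1_general hℓ 0 c fun w ↦ ENNReal.ofReal (‖F w‖ ^ 2)
end

section
/- Let ℓ > 0, c ≥ 1 and let N ≥ 1 be an integer. Let f : ℂ → ℂ be holomorphic on the half-plane {z : Im z > c}, satisfy f(z + ℓ) = f(z) for all z with Im z > c, and be bounded near infinity in the sense that there exist M ≥ 0 and C ≥ c with ‖f z‖ ≤ M whenever Im z ≥ C. If the function z ↦ ‖f z‖² · (Im z)^(2N−2) is integrable over the half-strip {z : 0 < Re z < ℓ, Im z > c} with respect to the two-dimensional Lebesgue measure, then f tends to 0 as Im z → ∞, i.e. for every ε > 0 there exists A such that ‖f z‖ < ε for all z with Im z ≥ A. -/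
open MeasureTheory

/-!
By the area mean value property and Jensen's inequality, `‖f z‖ ^ p` with `p ≥ 1` is at most the
average of `‖f‖ ^ p` over the disc of radius `ℓ / 2` about `z`. That disc lies in a vertical strip
of width `ℓ`, so by periodicity the average is at most a constant times the integral of `‖f‖ ^ p`
over `{0 < Re w ≤ ℓ, Im w > Im z - ℓ / 2}`. This is a tail of a convergent integral, because the
weight `(Im w) ^ k` is at least `1` high up in the half-plane.
-/

open Complex Filter Function Metric Set
open scoped Real Topology

section AreaMeanValue

theorem integrableOn_ball_of_continuousOn_closedBall {X F : Type*} [PseudoMetricSpace X]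
    [ProperSpace X] [MeasurableSpace X] [OpensMeasurableSpace X] (μ : Measure X)
    [IsFiniteMeasureOnCompacts μ] [NormedAddCommGroup F] {g : X → F} {x : X} {r : ℝ}
    (hg : ContinuousOn g (closedBall x r)) : IntegrableOn g (ball x r) μ :=
  (hg.integrableOn_compact' (isCompact_closedBall x r) measurableSet_closedBall).mono_set
    ball_subset_closedBall

section

variable {E : Type*} [NormedAddCommGroup E] [NormedSpace ℝ E] {f : ℂ → E} {c : ℂ} {r : ℝ}

theorem setIntegral_ball_eq_setIntegral_polar (f : ℂ → E) (c : ℂ) (r : ℝ) :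
    ∫ z in ball c r, f z = ∫ p in Ioo 0 r ×ˢ Ioo (-π) π, p.1 • f (circleMap c p.1 p.2) := by
  have h_symm (p : ℝ × ℝ) : c + Complex.polarCoord.symm p = circleMap c p.1 p.2 := by
    simp [circleMap, exp_mul_I]
  have h_target : Ioo 0 r ×ˢ Ioo (-π) π = polarCoord.target ∩ Iio r ×ˢ univ := by
    rw [polarCoord_target, prod_inter_prod, inter_univ, Ioi_inter_Iio]
  rw [← integral_indicator measurableSet_ball, ← integral_add_left_eq_self _ c,
    ← Complex.integral_comp_polarCoord_symm, h_target,
    ← setIntegral_indicator (measurableSet_Iio.prod .univ)]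
  refine setIntegral_congr_fun polarCoord.open_target.measurableSet fun p hp => ?_
  have h_mem : circleMap c p.1 p.2 ∈ ball c r ↔ p ∈ Iio r ×ˢ univ := by
    have h_pos : 0 < p.1 := hp.1
    simp [circleMap, abs_of_pos h_pos]
  by_cases hpr : p ∈ Iio r ×ˢ univ <;>
    simp only [h_symm, h_mem, hpr, indicator, if_true, if_false, smul_zero]

theorem setIntegral_circleMap_eq_circleAverage (f : ℂ → E) (c : ℂ) (r : ℝ) :
    ∫ θ in Ioo (-π) π, f (circleMap c r θ) = (2 * π) • Real.circleAverage f c r := by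
  rw [Real.circleAverage_eq_integral_add (-π), smul_inv_smul₀ Real.two_pi_pos.ne',
    intervalIntegral.integral_comp_add_right (fun θ => f (circleMap c r θ)), zero_add,
    show 2 * π + -π = π by ring, intervalIntegral.integral_of_le (by linarith [Real.pi_pos]),
    integral_Ioc_eq_integral_Ioo]

theorem setIntegral_ball_eq_integral_circleAverage (hf : ContinuousOn f (closedBall c r))
    (hr : 0 ≤ r) :
    ∫ z in ball c r, f z = ∫ s in 0..r, (s * (2 * π)) • Real.circleAverage f c s := by
  have h_int : IntegrableOn (fun p : ℝ × ℝ => p.1 • f (circleMap c p.1 p.2))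
      (Ioo 0 r ×ˢ Ioo (-π) π) (volume.prod volume) := by
    have h_maps : MapsTo (fun p : ℝ × ℝ => circleMap c p.1 p.2)
        (Icc 0 r ×ˢ Icc (-π) π) (closedBall c r) := fun p hp => by
      simpa [circleMap, abs_of_nonneg hp.1.1] using hp.1.2
    have h_cont : ContinuousOn (fun p : ℝ × ℝ => p.1 • f (circleMap c p.1 p.2))
        (Icc 0 r ×ˢ Icc (-π) π) :=
      continuousOn_fst.smul (hf.comp (by unfold circleMap; fun_prop) h_maps)
    exact (h_cont.integrableOn_compact (isCompact_Icc.prod isCompact_Icc)).mono_set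
      (prod_mono Ioo_subset_Icc_self Ioo_subset_Icc_self)
  rw [setIntegral_ball_eq_setIntegral_polar, Measure.volume_eq_prod, setIntegral_prod _ h_int,
    intervalIntegral.integral_of_le hr, integral_Ioc_eq_integral_Ioo]
  simp_rw [integral_smul, setIntegral_circleMap_eq_circleAverage, smul_smul]

theorem volume_real_complex_ball (c : ℂ) (hr : 0 ≤ r) :
    volume.real (ball c r) = π * r ^ 2 := by
  simp [Measure.real, Complex.volume_ball, hr, mul_comm]

end

variable {E : Type*} [NormedAddCommGroup E] [NormedSpace ℂ E] [CompleteSpace E]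
  {f : ℂ → E} {c : ℂ} {r : ℝ}

theorem average_ball_of_diffContOnCl (hf : DiffContOnCl ℂ f (ball c r)) (hr : 0 < r) :
    ⨍ z in ball c r, f z = f c := by
  have h_circle : EqOn (fun s => (s * (2 * π)) • Real.circleAverage f c s)
      (fun s => (s * (2 * π)) • f c) (uIcc 0 r) := fun s hs => by
    rw [uIcc_of_le hr.le] at hs
    have h_sub : ball c |s| ⊆ ball c r := ball_subset_ball (by rw [abs_of_nonneg hs.1]; exact hs.2)
    simp only [(hf.mono h_sub).circleAverage]
  have h_area : ∫ s in 0..r, s * (2 * π) = π * r ^ 2 := by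
    rw [intervalIntegral.integral_mul_const, integral_id]
    ring
  rw [setAverage_eq, setIntegral_ball_eq_integral_circleAverage hf.continuousOn_ball hr.le,
    intervalIntegral.integral_congr h_circle, intervalIntegral.integral_smul_const, h_area,
    volume_real_complex_ball c hr.le, inv_smul_smul₀ (by positivity)]

theorem norm_rpow_le_average_ball {p : ℝ} (hp : 1 ≤ p) (hf : DiffContOnCl ℂ f (ball c r))
    (hr : 0 < r) : ‖f c‖ ^ p ≤ ⨍ z in ball c r, ‖f z‖ ^ p := by
  have h_rpow : Continuous fun x : ℝ => x ^ p := Real.continuous_rpow_const (by positivity)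
  have h_norm := hf.continuousOn_ball.norm
  have h_int := integrableOn_ball_of_continuousOn_closedBall volume hf.continuousOn_ball
  have h_int_norm := integrableOn_ball_of_continuousOn_closedBall volume h_norm
  have h_int_rpow :=
    integrableOn_ball_of_continuousOn_closedBall volume (h_rpow.comp_continuousOn h_norm)
  have h_ball := (measure_ball_pos volume c hr).ne'
  calc ‖f c‖ ^ p
      = ‖⨍ z in ball c r, f z‖ ^ p := by rw [average_ball_of_diffContOnCl hf hr]
    _ ≤ (⨍ z in ball c r, ‖f z‖) ^ p := by
      gcongr
      exact convexOn_univ_norm.map_set_average_le continuous_norm.continuousOn isClosed_univ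
        h_ball measure_ball_lt_top.ne (by simp) h_int h_int_norm
    _ ≤ ⨍ z in ball c r, ‖f z‖ ^ p :=
      (convexOn_rpow hp).map_set_average_le h_rpow.continuousOn isClosed_Ici h_ball
        measure_ball_lt_top.ne (by simp) h_int_norm h_int_rpow

end AreaMeanValue

section Strip

variable {E : Type*} [NormedAddCommGroup E] {f : ℂ → E} {ℓ : ℝ} {s S : Set ℝ}

theorem measurableSet_reProdIm (hs : MeasurableSet s) (hS : MeasurableSet S) :
    MeasurableSet (s ×ℂ S) :=
  (measurable_re hs).inter (measurable_im hS)

theorem ball_subset_Ioc_reProdIm_Ioi (z : ℂ) (r : ℝ) :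
    ball z r ⊆ Ioc (z.re - r) (z.re + r) ×ℂ Ioi (z.im - r) := fun w hw => by
  rw [mem_ball, dist_eq] at hw
  have h_re := abs_lt.1 ((abs_re_le_norm (w - z)).trans_lt hw)
  have h_im := abs_lt.1 ((abs_im_le_norm (w - z)).trans_lt hw)
  rw [sub_re] at h_re
  rw [sub_im] at h_im
  rw [mem_reProdIm, mem_Ioc, mem_Ioi]
  refine ⟨⟨?_, ?_⟩, ?_⟩ <;> linarith

theorem Ioo_reProdIm_ae_eq_Ioc_reProdIm (a b : ℝ) (S : Set ℝ) :
    (Ioo a b ×ℂ S : Set ℂ) =ᵐ[volume] Ioc a b ×ℂ S :=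
  volume_preserving_equiv_real_prod.quasiMeasurePreserving.preimage_ae_eq
    (Measure.set_prod_ae_eq (Ioo_ae_eq_Ioc (μ := volume)) (ae_eq_refl S))

theorem isAddFundamentalDomain_re_preimage_Ioc (hℓ : 0 < ℓ) (a : ℝ) :
    IsAddFundamentalDomain (AddSubgroup.zmultiples (ℓ : ℂ)) (re ⁻¹' Ioc a (a + ℓ)) := by
  refine .mk' (measurable_re measurableSet_Ioc).nullMeasurableSet fun z => ?_
  have h_inj : Injective fun n : ℤ => n • (ℓ : ℂ) := fun m n hmn => by simpa [hℓ.ne'] using hmn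
  have h_bij : Bijective
      (codRestrict (fun n : ℤ => n • (ℓ : ℂ)) (AddSubgroup.zmultiples (ℓ : ℂ)) fun n => ⟨n, rfl⟩) :=
    (Equiv.ofInjective _ h_inj).bijective
  refine h_bij.existsUnique_iff.2 ?_
  simpa [AddSubgroup.vadd_def, add_comm] using existsUnique_add_zsmul_mem_Ioc hℓ z.re a

theorem periodic_indicator_im_preimage (hper : ∀ z : ℂ, z.im ∈ S → f (z + ℓ) = f z) :
    Periodic ((im ⁻¹' S).indicator f) ℓ := fun z => by
  by_cases hz : z.im ∈ S <;> simp [indicator, hz, hper]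

theorem integrableOn_Ioc_reProdIm_iff (hℓ : 0 < ℓ) (hS : MeasurableSet S)
    (hper : ∀ z : ℂ, z.im ∈ S → f (z + ℓ) = f z) (a b : ℝ) :
    IntegrableOn f (Ioc a (a + ℓ) ×ℂ S) ↔ IntegrableOn f (Ioc b (b + ℓ) ×ℂ S) := by
  have h_indicator (t : ℝ) : IntegrableOn f (Ioc t (t + ℓ) ×ℂ S) ↔
      IntegrableOn ((im ⁻¹' S).indicator f) (re ⁻¹' Ioc t (t + ℓ)) := by
    rw [reProdIm, inter_comm, IntegrableOn, ← Measure.restrict_restrict (measurable_im hS)]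
    exact (integrable_indicator_iff (measurable_im hS)).symm
  rw [h_indicator, h_indicator]
  exact (isAddFundamentalDomain_re_preimage_Ioc hℓ a).integrableOn_iff
    (isAddFundamentalDomain_re_preimage_Ioc hℓ b)
    (periodic_indicator_im_preimage hper).map_vadd_zmultiples

variable [NormedSpace ℝ E]

theorem setIntegral_Ioc_reProdIm_eq (hℓ : 0 < ℓ) (hS : MeasurableSet S)
    (hper : ∀ z : ℂ, z.im ∈ S → f (z + ℓ) = f z) (a b : ℝ) :
    ∫ z in Ioc a (a + ℓ) ×ℂ S, f z = ∫ z in Ioc b (b + ℓ) ×ℂ S, f z := by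
  simp_rw [reProdIm, ← setIntegral_indicator (measurable_im hS)]
  exact (isAddFundamentalDomain_re_preimage_Ioc hℓ a).setIntegral_eq
    (isAddFundamentalDomain_re_preimage_Ioc hℓ b)
    (periodic_indicator_im_preimage hper).map_vadd_zmultiples

theorem tendsto_setIntegral_reProdIm_Ioi {c : ℝ} (hs : MeasurableSet s)
    (hf : IntegrableOn f (s ×ℂ Ioi c)) :
    Tendsto (fun A => ∫ z in s ×ℂ Ioi A, f z) atTop (𝓝 0) := by
  have h_inter : ⋂ A : ℝ, s ×ℂ Ioi A = ∅ :=
    eq_empty_of_forall_notMem fun z hz => lt_irrefl z.im (mem_iInter.1 hz z.im).2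
  have h_anti : Antitone fun A : ℝ => s ×ℂ Ioi A := fun A B hAB =>
    inter_subset_inter_right _ (preimage_mono (Ioi_subset_Ioi hAB))
  have h_tendsto := tendsto_setIntegral_of_antitone
    (fun A => measurableSet_reProdIm hs measurableSet_Ioi) h_anti ⟨c, hf⟩
  rwa [h_inter, setIntegral_empty] at h_tendsto

theorem integrableOn_of_integrableOn_im_pow_smul {T : Set ℂ} {k : ℕ} (hT : MeasurableSet T)
    (hT_im : ∀ z ∈ T, 1 ≤ z.im) (hf : IntegrableOn (fun z => z.im ^ k • f z) T) :
    IntegrableOn f T := by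
  have h_bound : ∀ᵐ z ∂volume.restrict T, ‖(z.im ^ k)⁻¹‖ ≤ 1 := by
    filter_upwards [ae_restrict_mem hT] with z hz
    rw [norm_inv, norm_pow]
    exact inv_le_one_of_one_le₀ (one_le_pow₀ ((hT_im z hz).trans (le_abs_self _)))
  have h_div := hf.bdd_smul 1 (by fun_prop) h_bound
  refine IntegrableOn.congr_fun h_div (fun z hz => inv_smul_smul₀ ?_ _) hT
  exact (pow_pos (zero_lt_one.trans_le (hT_im z hz)) k).ne'

end Strip

section Decay

variable {E : Type*} [NormedAddCommGroup E] [NormedSpace ℂ E] [CompleteSpace E]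
  {f : ℂ → E} {ℓ c p : ℝ}

theorem norm_rpow_le_setIntegral_strip (hℓ : 0 < ℓ) (hp : 1 ≤ p)
    (hf : ∀ z : ℂ, c < z.im → DifferentiableAt ℂ f z)
    (hper : ∀ z : ℂ, c < z.im → f (z + ℓ) = f z)
    (hint : IntegrableOn (fun z => ‖f z‖ ^ p) (Ioc 0 ℓ ×ℂ Ioi c))
    {z : ℂ} (hz : c + ℓ / 2 < z.im) :
    ‖f z‖ ^ p ≤
      (π * (ℓ / 2) ^ 2)⁻¹ * ∫ w in Ioc 0 ℓ ×ℂ Ioi (z.im - ℓ / 2), ‖f w‖ ^ p := by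
  set r := ℓ / 2 with hr_def
  have hr : 0 < r := half_pos hℓ
  set a := z.re - r with ha
  have h_ball : ball z r ⊆ Ioc a (a + ℓ) ×ℂ Ioi (z.im - r) := by
    have := ball_subset_Ioc_reProdIm_Ioi z r
    rwa [show z.re + r = a + ℓ by rw [ha, hr_def]; ring] at this
  have h_im {w : ℂ} (hw : w.im ∈ Ioi (z.im - r)) : c < w.im := by
    have : z.im - r < w.im := hw
    linarith
  have h_diff : DiffContOnCl ℂ f (ball z r) := by
    refine DifferentiableOn.diffContOnCl fun w hw => (hf w ?_).differentiableWithinAt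
    rw [closure_ball z hr.ne', mem_closedBall, dist_eq] at hw
    have := abs_le.1 ((abs_im_le_norm (w - z)).trans hw)
    rw [sub_im] at this
    linarith
  have hper' (w : ℂ) (hw : w.im ∈ Ioi (z.im - r)) : ‖f (w + ℓ)‖ ^ p = ‖f w‖ ^ p := by
    rw [hper w (h_im hw)]
  have hint' : IntegrableOn (fun w => ‖f w‖ ^ p) (Ioc a (a + ℓ) ×ℂ Ioi (z.im - r)) := by
    rw [integrableOn_Ioc_reProdIm_iff hℓ measurableSet_Ioi hper' a 0, zero_add]
    exact hint.mono_set fun w hw => ⟨hw.1, h_im hw.2⟩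
  calc ‖f z‖ ^ p
      ≤ ⨍ w in ball z r, ‖f w‖ ^ p := norm_rpow_le_average_ball hp h_diff hr
    _ = (π * r ^ 2)⁻¹ * ∫ w in ball z r, ‖f w‖ ^ p := by
      rw [setAverage_eq, volume_real_complex_ball z hr.le, smul_eq_mul]
    _ ≤ (π * r ^ 2)⁻¹ * ∫ w in Ioc a (a + ℓ) ×ℂ Ioi (z.im - r), ‖f w‖ ^ p :=
      mul_le_mul_of_nonneg_left (setIntegral_mono_set hint'
        (ae_of_all _ fun w => Real.rpow_nonneg (norm_nonneg _) p) h_ball.eventuallyLE)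
        (by positivity)
    _ = (π * r ^ 2)⁻¹ * ∫ w in Ioc 0 ℓ ×ℂ Ioi (z.im - r), ‖f w‖ ^ p := by
      rw [setIntegral_Ioc_reProdIm_eq hℓ measurableSet_Ioi hper' a 0, zero_add]

theorem tendsto_zero_of_integrableOn_norm_rpow_strip (hℓ : 0 < ℓ) (hp : 1 ≤ p)
    (hf : ∀ z : ℂ, c < z.im → DifferentiableAt ℂ f z)
    (hper : ∀ z : ℂ, c < z.im → f (z + ℓ) = f z)
    (hint : IntegrableOn (fun z => ‖f z‖ ^ p) (Ioc 0 ℓ ×ℂ Ioi c)) :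
    Tendsto f (comap im atTop) (𝓝 0) := by
  have h_tail : Tendsto (fun z : ℂ => (π * (ℓ / 2) ^ 2)⁻¹ *
      ∫ w in Ioc 0 ℓ ×ℂ Ioi (z.im - ℓ / 2), ‖f w‖ ^ p) (comap im atTop) (𝓝 0) := by
    have h_im : Tendsto (fun z : ℂ => z.im - ℓ / 2) (comap im atTop) atTop :=
      tendsto_atTop_add_const_right _ _ tendsto_comap
    simpa only [mul_zero, comp_apply] using
      ((tendsto_setIntegral_reProdIm_Ioi measurableSet_Ioc hint).comp h_im).const_mul
        (π * (ℓ / 2) ^ 2)⁻¹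
  have h_high : ∀ᶠ z : ℂ in comap im atTop, c + ℓ / 2 < z.im :=
    (eventually_gt_atTop _).comap im
  have h_rpow : Tendsto (fun z => ‖f z‖ ^ p) (comap im atTop) (𝓝 0) :=
    squeeze_zero' (.of_forall fun z => by positivity)
      (h_high.mono fun z hz => norm_rpow_le_setIntegral_strip hℓ hp hf hper hint hz) h_tail
  have hp_pos : 0 < p := zero_lt_one.trans_le hp
  rw [tendsto_zero_iff_norm_tendsto_zero]
  simpa [Real.rpow_rpow_inv, hp_pos.ne'] using
    h_rpow.rpow_const (p := p⁻¹) (.inr (inv_nonneg.2 hp_pos.le))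

theorem stmt_2_general (hℓ : 0 < ℓ) (hp : 1 ≤ p) {k : ℕ}
    (hf : ∀ z : ℂ, c < z.im → DifferentiableAt ℂ f z)
    (hper : ∀ z : ℂ, c < z.im → f (z + ℓ) = f z)
    (hint : IntegrableOn (fun z : ℂ => ‖f z‖ ^ p * z.im ^ k)
      {z : ℂ | 0 < z.re ∧ z.re < ℓ ∧ c < z.im}) :
    ∀ ε > 0, ∃ A : ℝ, ∀ z : ℂ, A ≤ z.im → ‖f z‖ < ε := by
  have h_strip : {z : ℂ | 0 < z.re ∧ z.re < ℓ ∧ c < z.im} = Ioo 0 ℓ ×ℂ Ioi c := by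
    ext z
    simp [mem_reProdIm, and_assoc]
  have h_weighted : IntegrableOn (fun z => z.im ^ k • ‖f z‖ ^ p) (Ioc 0 ℓ ×ℂ Ioi c) := by
    rw [h_strip, integrableOn_congr_set_ae (Ioo_reProdIm_ae_eq_Ioc_reProdIm 0 ℓ _)] at hint
    simpa only [smul_eq_mul, mul_comm] using hint
  have h_norm : IntegrableOn (fun z => ‖f z‖ ^ p) (Ioc 0 ℓ ×ℂ Ioi (max c 1)) :=
    integrableOn_of_integrableOn_im_pow_smul
      (measurableSet_reProdIm measurableSet_Ioc measurableSet_Ioi)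
      (fun z hz => (max_lt_iff.1 (mem_Ioi.1 hz.2)).2.le)
      (h_weighted.mono_set fun z hz => ⟨hz.1, Ioi_subset_Ioi (le_max_left c 1) hz.2⟩)
  have h_tendsto := tendsto_zero_of_integrableOn_norm_rpow_strip hℓ hp
    (fun z hz => hf z (max_lt_iff.1 hz).1) (fun z hz => hper z (max_lt_iff.1 hz).1) h_norm
  intro ε hε
  have h_event := (tendsto_zero_iff_norm_tendsto_zero.1 h_tendsto).eventually (gt_mem_nhds hε)
  simpa using (atTop_basis.comap im).eventually_iff.1 h_event

end Decay

/-- A periodic holomorphic function on a half-plane which is bounded near infinity and whose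
weighted L² norm with weight `(Im z)^(2N-2)`, `N ≥ 1`, is finite on a period half-strip,
tends to `0` as `Im z → ∞`. -/
theorem stmt_2 (ℓ c : ℝ) (hℓ : 0 < ℓ) (hc : 1 ≤ c) (N : ℕ) (hN : 1 ≤ N) (f : ℂ → ℂ)
    (hf : ∀ z : ℂ, c < z.im → DifferentiableAt ℂ f z)
    (hper : ∀ z : ℂ, c < z.im → f (z + (ℓ : ℂ)) = f z)
    (hbdd : ∃ M C : ℝ, 0 ≤ M ∧ c ≤ C ∧ ∀ z : ℂ, C ≤ z.im → ‖f z‖ ≤ M)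
    (hint : IntegrableOn (fun z : ℂ => ‖f z‖ ^ 2 * z.im ^ (2 * N - 2))
      {z : ℂ | 0 < z.re ∧ z.re < ℓ ∧ c < z.im} volume) :
    ∀ ε > 0, ∃ A : ℝ, ∀ z : ℂ, A ≤ z.im → ‖f z‖ < ε :=
  stmt_2_general hℓ one_le_two hf hper (by simpa only [Real.rpow_two] using hint)
end

section
/- Let N ≥ 1 be an integer and let f be a modular form of weight 2N for the full modular group SL(2,ℤ). If the function z ↦ ‖f z‖² · (Im z)^(2N−2) is integrable over the standard fundamental domain 𝒟 = {z ∈ ℍ : 1 ≤ ‖z‖² and |Re z| ≤ 1/2} with respect to the two-dimensional Lebesgue measure dx dy induced from the inclusion ℍ ⊂ ℂ, then f is a cusp form, i.e. f(z) → 0 as Im z → ∞. -/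
open MeasureTheory MatrixGroups

/-!
A modular form tends to its value `c` at the cusp `∞`, so along a half-strip its norm is eventually
at least `‖c‖ / 2`. If `c ≠ 0`, integrability of `‖f‖ ^ 2 * y ^ (2 * N - 2)` over the half-strip
would, by Fubini, force `y ^ (2 * N - 2)` to be integrable at infinity, but `2 * N - 2 ≥ -1`.
-/

open Complex Filter Set Topology UpperHalfPlane

lemma integrableOn_of_integrableOn_comp_im {E : Type*} [NormedAddCommGroup E] {g : ℝ → E}
    {s t : Set ℝ} (hs : volume s ≠ 0) (hg : IntegrableOn (fun z : ℂ ↦ g z.im) (s ×ℂ t)) :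
    IntegrableOn g t := by
  have hprod : IntegrableOn (fun p : ℝ × ℝ ↦ g p.2) (s ×ˢ t) :=
    (volume_preserving_equiv_real_prod.integrableOn_comp_preimage
      measurableEquivRealProd.measurableEmbedding).1 hg
  rw [IntegrableOn, Measure.volume_eq_prod, ← Measure.prod_restrict] at hprod
  exact hprod.of_comp_snd (Measure.restrict_eq_zero.not.2 hs)

theorem eq_zero_of_tendsto_atImInfty_of_integrableOn_smul {E : Type*} [NormedAddCommGroup E]
    [NormedSpace ℝ E] {f : ℍ → E} {c : E} {w : ℝ → ℝ} {s : Set ℝ} {B : ℝ}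
    (hf : Tendsto f atImInfty (𝓝 c)) (hw_meas : Measurable w)
    (hw_nonint : ¬ IntegrableAtFilter w atTop) (hs_meas : MeasurableSet s) (hs : volume s ≠ 0)
    (hint : IntegrableOn (fun z : ℂ ↦ w z.im • f (ofComplex z)) (s ×ℂ Ici B)) :
    c = 0 := by
  by_contra hc
  have hc_pos : 0 < ‖c‖ := norm_pos_iff.2 hc
  obtain ⟨A, hA⟩ : ∃ A : ℝ, ∀ z : ℂ, A ≤ z.im → ‖c‖ / 2 < ‖f (ofComplex z)‖ := by
    have hev : ∀ᶠ z in comap Complex.im atTop, ‖c‖ / 2 < ‖f (ofComplex z)‖ :=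
      (hf.comp tendsto_comap_im_ofComplex).norm.eventually_const_lt (half_lt_self hc_pos)
    simpa using (atTop_basis.comap Complex.im).eventually_iff.1 hev
  refine hw_nonint ⟨Ici (max A B), Ici_mem_atTop _, integrableOn_of_integrableOn_comp_im hs ?_⟩
  have hint' : IntegrableOn (fun z : ℂ ↦ w z.im • f (ofComplex z)) (s ×ℂ Ici (max A B)) :=
    hint.mono_set fun z hz ↦ ⟨hz.1, (le_max_right A B).trans hz.2⟩
  refine (hint'.norm.const_mul (2 / ‖c‖)).mono' (hw_meas.comp measurable_im).aestronglyMeasurable ?_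
  have hstrip : MeasurableSet (s ×ℂ Ici (max A B)) :=
    (hs_meas.preimage measurable_re).inter (measurableSet_Ici.preimage measurable_im)
  filter_upwards [ae_restrict_mem hstrip] with z hz
  have hfz : ‖c‖ / 2 ≤ ‖f (ofComplex z)‖ := (hA z ((le_max_left A B).trans hz.2)).le
  calc ‖w z.im‖ = 2 / ‖c‖ * (‖w z.im‖ * (‖c‖ / 2)) := by field_simp
    _ ≤ 2 / ‖c‖ * (‖w z.im‖ * ‖f (ofComplex z)‖) := by gcongr
    _ = 2 / ‖c‖ * ‖w z.im • f (ofComplex z)‖ := by rw [norm_smul]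

lemma integrableAtFilter_zpow_atTop_iff {m : ℤ} :
    IntegrableAtFilter (fun y : ℝ ↦ y ^ m) atTop ↔ m < -1 := by
  have h := integrableAtFilter_rpow_atTop_iff (s := m)
  simp only [Real.rpow_intCast] at h
  exact_mod_cast h

lemma Icc_reProdIm_Ici_one_subset :
    Icc (-(1 / 2)) (1 / 2) ×ℂ Ici 1 ⊆ {z : ℂ | 0 < z.im ∧ 1 ≤ ‖z‖ ^ 2 ∧ |z.re| ≤ 1 / 2} := by
  rintro z ⟨hre, him : 1 ≤ z.im⟩
  exact ⟨one_pos.trans_le him, one_le_pow₀ (him.trans (im_le_norm z)), abs_le.2 hre⟩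

lemma integrableOn_Icc_reProdIm_Ici_one {E : Type*} [Norm E] {f : ℍ → E} {p : ℕ} {m : ℤ}
    (hint : IntegrableOn
      (fun z : ℂ ↦ if hz : 0 < z.im then ‖f ⟨z, hz⟩‖ ^ p * z.im ^ m else 0)
      {z : ℂ | 0 < z.im ∧ 1 ≤ ‖z‖ ^ 2 ∧ |z.re| ≤ 1 / 2}) :
    IntegrableOn (fun z : ℂ ↦ ‖f (ofComplex z)‖ ^ p * z.im ^ m)
      (Icc (-(1 / 2)) (1 / 2) ×ℂ Ici 1) := by
  refine (hint.mono_set Icc_reProdIm_Ici_one_subset).congr_fun (fun z hz ↦ ?_)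
    (isClosed_Icc.reProdIm isClosed_Ici).measurableSet
  have him : 0 < z.im := (Icc_reProdIm_Ici_one_subset hz).1
  simp only [dif_pos him, ofComplex_apply_of_im_pos him]

section ModularForm

variable {F : Type*} [FunLike F ℍ ℂ] {Γ : Subgroup (GL (Fin 2) ℝ)} {k : ℤ}
  [Γ.HasDetPlusMinusOne] [DiscreteTopology Γ] [Fact (IsCusp OnePoint.infty Γ)]

lemma tendsto_valueAtInfty [ModularFormClass F Γ k] (f : F) :
    Tendsto f atImInfty (𝓝 (valueAtInfty f)) :=
  tendsto_sub_nhds_zero_iff.1 <|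
    IsZeroAtImInfty.of_exp_decay (ModularFormClass.exp_decay_sub_atImInfty' f)

theorem stmt_4_general [ModularFormClass F Γ k] (f : F) {p : ℕ} {m : ℤ} {a b B : ℝ}
    (hm : -1 ≤ m) (hab : a < b)
    (hint : IntegrableOn (fun z : ℂ ↦ ‖f (ofComplex z)‖ ^ p * z.im ^ m) (Icc a b ×ℂ Ici B)) :
    IsZeroAtImInfty f := by
  have hlim := tendsto_valueAtInfty f
  have hpow : ‖valueAtInfty f‖ ^ p = 0 :=
    eq_zero_of_tendsto_atImInfty_of_integrableOn_smul (hlim.norm.pow p) (by fun_prop)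
      (integrableAtFilter_zpow_atTop_iff.not.2 hm.not_gt) measurableSet_Icc (by simpa using hab)
      (by simpa only [smul_eq_mul, mul_comm] using hint)
  rwa [norm_eq_zero.1 (eq_zero_of_pow_eq_zero hpow)] at hlim

end ModularForm

/-- A modular form of weight `2N`, `N ≥ 1`, for `SL(2,ℤ)` which is square integrable against
the weight `(Im z)^(2N-2)` over the standard fundamental domain is a cusp form, i.e. it tends
to `0` as `Im z → ∞`. -/
theorem stmt_4 (N : ℕ) (hN : 1 ≤ N) (f : ModularForm (⊤ : Subgroup SL(2, ℤ)) (2 * N))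
    (hint : IntegrableOn
      (fun z : ℂ =>
        if hz : 0 < z.im then ‖f ⟨z, hz⟩‖ ^ 2 * z.im ^ (2 * (N : ℤ) - 2) else 0)
      {z : ℂ | 0 < z.im ∧ 1 ≤ ‖z‖ ^ 2 ∧ |z.re| ≤ 1 / 2} volume) :
    ∀ ε > 0, ∃ A : ℝ, ∀ z : UpperHalfPlane, A ≤ z.im → ‖f z‖ < ε := by
  have hzero : IsZeroAtImInfty f :=
    stmt_4_general f (by omega) (by norm_num) (integrableOn_Icc_reProdIm_Ici_one hint)
  exact fun ε hε ↦ (atImInfty_mem _).1 (hzero.norm.eventually_lt_const (by simpa using hε))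
end

section
/- Let N ≥ 1 be an integer, let P be a polynomial with complex coefficients of degree at most N − 1, let β ∈ ℝ and R ≥ 2. Then the function z ↦ ‖P(z)‖² · (1 + ‖z‖²)^(−N) · (Real.log(‖z‖²))^β · ‖z‖^(−2) is integrable on the set {z ∈ ℂ : ‖z‖ > R} with respect to the two-dimensional Lebesgue measure on ℂ. -/
open MeasureTheory

/-!
Near infinity `‖P(z)‖² (1 + ‖z‖²)^(-N) ‖z‖^(-2)` is `O(‖z‖^(-4))`, because `P(z) = O(‖z‖^(N - 1))`.
A power of the logarithm costs less than any positive power of `‖z‖`, and `‖z‖^(-s)` is integrable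
at infinity as soon as `s` exceeds the real dimension. Away from infinity the integrand is
continuous on the closed set `R ≤ ‖z‖`, where `log ‖z‖` is positive because `1 < R`.
-/

open Asymptotics Bornology Filter Module Polynomial

theorem integrableOn_of_continuousOn_of_isBigO_cocompact {X F G : Type*} [TopologicalSpace X]
    [R1Space X] [SecondCountableTopology X] [MeasurableSpace X] [BorelSpace X]
    [NormedAddCommGroup F] [NormedAddCommGroup G] {μ : Measure X} [IsLocallyFiniteMeasure μ]
    {f : X → F} {g : X → G} {s : Set X} (hs : IsClosed s)
    (hf : ContinuousOn f s) (hfg : f =O[cocompact X] g)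
    (hg : IntegrableAtFilter g (cocompact X) μ) : IntegrableOn f s μ :=
  have hloc : LocallyIntegrable f (μ.restrict s) :=
    (locallyIntegrableOn_iff_locallyIntegrable_restrict hs).mp
      (hf.locallyIntegrableOn hs.measurableSet)
  hloc.integrable_of_isBigO_cocompact hfg (hg.mono_measure Measure.restrict_le_self)

theorem isBigO_norm_rpow_neg_one_add_norm {E : Type*} [SeminormedAddCommGroup E] {s : ℝ}
    (hs : 0 ≤ s) :
    (fun x : E => ‖x‖ ^ (-s)) =O[cobounded E] fun x => (1 + ‖x‖) ^ (-s) := by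
  refine IsBigO.of_bound (2 ^ s) ?_
  filter_upwards [tendsto_norm_cobounded_atTop.eventually_ge_atTop 1] with x hx
  rw [Real.norm_of_nonneg (by positivity), Real.norm_of_nonneg (by positivity)]
  have hle : 1 + ‖x‖ ≤ 2 * ‖x‖ := by linarith
  calc ‖x‖ ^ (-s) = 2 ^ s * (2 * ‖x‖) ^ (-s) := by
        rw [Real.mul_rpow two_pos.le (norm_nonneg x), ← mul_assoc, ← Real.rpow_add two_pos,
          add_neg_cancel, Real.rpow_zero, one_mul]
    _ ≤ 2 ^ s * (1 + ‖x‖) ^ (-s) := by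
        gcongr 2 ^ s * ?_
        exact Real.rpow_le_rpow_of_nonpos (by positivity) hle (neg_nonpos.mpr hs)

theorem isLittleO_log_norm_rpow_norm_rpow {E : Type*} [SeminormedAddCommGroup E] (β : ℝ) {ε : ℝ}
    (hε : 0 < ε) :
    (fun x : E => Real.log ‖x‖ ^ β) =o[cobounded E] fun x => ‖x‖ ^ ε :=
  (isLittleO_log_rpow_rpow_atTop β hε).comp_tendsto tendsto_norm_cobounded_atTop

section FiniteDimensional

variable {E F : Type*} [NormedAddCommGroup E] [NormedSpace ℝ E] [FiniteDimensional ℝ E]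
  [MeasurableSpace E] [BorelSpace E] [NormedAddCommGroup F] {μ : Measure E} [μ.IsAddHaarMeasure]
  {s R : ℝ}

theorem integrableOn_of_continuousOn_of_isBigO_norm_rpow {f : E → F} {t : Set E}
    (ht : IsClosed t) (hf : ContinuousOn f t) (hs : finrank ℝ E < s)
    (hfO : f =O[cobounded E] fun x => ‖x‖ ^ (-s)) : IntegrableOn f t μ := by
  have := FiniteDimensional.proper_real E
  have hs₀ : 0 ≤ s := (Nat.cast_nonneg _).trans hs.le
  have hdecay : f =O[cocompact E] fun x => (1 + ‖x‖) ^ (-s) := by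
    rw [← Metric.cobounded_eq_cocompact]
    exact hfO.trans (isBigO_norm_rpow_neg_one_add_norm hs₀)
  exact integrableOn_of_continuousOn_of_isBigO_cocompact ht hf hdecay
    ((integrable_one_add_norm hs).integrableAtFilter _)

theorem integrableOn_log_norm_rpow_smul [NormedSpace ℝ F] {f : E → F} (β : ℝ) (hR : 1 < R)
    (hf : ContinuousOn f {x | R ≤ ‖x‖}) (hs : finrank ℝ E < s)
    (hfO : f =O[cobounded E] fun x => ‖x‖ ^ (-s)) :
    IntegrableOn (fun x => Real.log ‖x‖ ^ β • f x) {x | R ≤ ‖x‖} μ := by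
  obtain ⟨r, hr, hrs⟩ := exists_between hs
  have hlog : ContinuousOn (fun x : E => Real.log ‖x‖ ^ β) {x | R ≤ ‖x‖} := fun x hx =>
    have hx' : 1 < ‖x‖ := hR.trans_le hx
    ((continuous_norm.continuousAt.log (by positivity)).rpow_const
      (.inl (Real.log_pos hx').ne')).continuousWithinAt
  refine integrableOn_of_continuousOn_of_isBigO_norm_rpow
    (isClosed_le continuous_const continuous_norm) (hlog.smul hf) hr ?_
  refine ((isLittleO_log_norm_rpow_norm_rpow β (sub_pos.mpr hrs)).isBigO.smul hfO).congr' .rfl ?_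
  filter_upwards [tendsto_norm_cobounded_atTop.eventually_gt_atTop 0] with x hx
  rw [smul_eq_mul, ← Real.rpow_add hx]
  ring_nf

end FiniteDimensional

section Polynomial

variable {A : Type*} [NormedRing A] [NormMulClass A] [NormOneClass A] {P : A[X]}

theorem isBigO_eval_norm_pow_cobounded {n : ℕ} (hP : P.natDegree ≤ n) :
    P.eval =O[cobounded A] fun z => ‖z‖ ^ n := by
  have : Nontrivial A := NormOneClass.nontrivial
  have hdeg : P.degree ≤ (X ^ n : A[X]).degree := by
    simpa only [degree_X_pow] using degree_le_of_natDegree_le hP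
  simpa only [eval_X_pow, norm_pow] using (isBigO_cobounded_of_degree_le hdeg).norm_right

theorem isBigO_norm_eval_sq_mul_one_add_norm_sq_zpow {N : ℕ} (hP : P.natDegree < N) :
    (fun z => ‖P.eval z‖ ^ 2 * (1 + ‖z‖ ^ 2) ^ (-(N : ℤ)) * ‖z‖ ^ (-2 : ℤ))
      =O[cobounded A] fun z => ‖z‖ ^ (-4 : ℝ) := by
  obtain ⟨n, rfl⟩ := Nat.exists_eq_add_one_of_ne_zero (Nat.ne_zero_of_lt hP)
  have heval : (fun z => ‖P.eval z‖ ^ 2) =O[cobounded A] fun z => (‖z‖ ^ n) ^ 2 :=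
    (isBigO_eval_norm_pow_cobounded (Nat.lt_succ_iff.mp hP)).norm_left.pow 2
  have hweight : (fun z : A => (1 + ‖z‖ ^ 2) ^ (-((n + 1 : ℕ) : ℤ))) =O[cobounded A]
      fun z => (‖z‖ ^ 2) ^ (-((n + 1 : ℕ) : ℤ)) := by
    refine IsBigO.of_norm_eventuallyLE ?_
    filter_upwards [tendsto_norm_cobounded_atTop.eventually_gt_atTop 0] with z hz
    rw [Real.norm_of_nonneg (by positivity), zpow_neg, zpow_neg, zpow_natCast, zpow_natCast]
    gcongr
    linarith
  refine ((heval.mul hweight).mul (isBigO_refl _ _)).congr' .rfl ?_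
  filter_upwards [tendsto_norm_cobounded_atTop.eventually_gt_atTop 0] with z hz
  rw [show (-4 : ℝ) = ((-4 : ℤ) : ℝ) by norm_num, Real.rpow_intCast, zpow_neg, zpow_natCast]
  field_simp
  ring

end Polynomial

theorem stmt_6_general {𝕜 : Type*} [RCLike 𝕜] [MeasurableSpace 𝕜] [BorelSpace 𝕜]
    (μ : Measure 𝕜) [μ.IsAddHaarMeasure] {N : ℕ} {P : 𝕜[X]} (hP : P.natDegree < N) (β : ℝ)
    {R : ℝ} (hR : 1 < R) :
    IntegrableOn
      (fun z : 𝕜 => ‖P.eval z‖ ^ 2 * (1 + ‖z‖ ^ 2) ^ (-(N : ℤ)) *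
        Real.log (‖z‖ ^ 2) ^ β * ‖z‖ ^ (-2 : ℤ))
      {z : 𝕜 | R < ‖z‖} μ := by
  set f : 𝕜 → ℝ := fun z => ‖P.eval z‖ ^ 2 * (1 + ‖z‖ ^ 2) ^ (-(N : ℤ)) * ‖z‖ ^ (-2 : ℤ) with hf
  have hcont : ContinuousOn f {z | R ≤ ‖z‖} := fun z hz => by
    have hz₀ : 0 < ‖z‖ := one_pos.trans (hR.trans_le hz)
    refine ContinuousAt.continuousWithinAt ?_
    fun_prop (disch := first | positivity | exact .inl (by positivity))
  have hdim : (finrank ℝ 𝕜 : ℝ) < 4 := by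
    exact_mod_cast (RCLike.finrank_le_two 𝕜).trans_lt (by norm_num)
  have hsub : {z : 𝕜 | R < ‖z‖} ⊆ {z | R ≤ ‖z‖} := fun z (hz : R < ‖z‖) => hz.le
  have hint : IntegrableOn (fun z => 2 ^ β * (Real.log ‖z‖ ^ β • f z)) {z | R < ‖z‖} μ :=
    ((integrableOn_log_norm_rpow_smul β hR hcont hdim
      (isBigO_norm_eval_sq_mul_one_add_norm_sq_zpow hP)).mono_set hsub).const_mul _
  refine hint.congr_fun (fun z hz => ?_) (measurableSet_lt measurable_const measurable_norm)
  have hlog : Real.log (‖z‖ ^ 2) ^ β = 2 ^ β * Real.log ‖z‖ ^ β := by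
    rw [Real.log_pow, Nat.cast_ofNat,
      Real.mul_rpow two_pos.le (Real.log_nonneg (hR.trans hz).le)]
  simp only [hf, hlog, smul_eq_mul]
  ring

/-- Polynomials of degree at most `N-1`, viewed as sections of `O(N)` on `ℙ¹`, are square
integrable near infinity against the Poincaré-type part of the metric. -/
theorem stmt_6 (N : ℕ) (hN : 1 ≤ N) (P : Polynomial ℂ) (hP : P.degree ≤ (N - 1 : ℕ))
    (β : ℝ) (R : ℝ) (hR : 2 ≤ R) :
    IntegrableOn
      (fun z : ℂ => ‖P.eval z‖ ^ 2 * (1 + ‖z‖ ^ 2) ^ (-(N : ℤ)) *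
        Real.log (‖z‖ ^ 2) ^ β * ‖z‖ ^ (-2 : ℤ))
      {z : ℂ | R < ‖z‖} volume :=
  stmt_6_general volume ((natDegree_le_of_degree_le hP).trans_lt (Nat.sub_one_lt_of_lt hN)) β
    (one_lt_two.trans_le hR)
end

section
/- Let N ≥ 1 be an integer, let P be a polynomial with complex coefficients of degree exactly N, let α ≥ −1 be a real number and R ≥ 2. Then the function z ↦ ‖P(z)‖² · (1 + ‖z‖²)^(−N) · (Real.log(‖z‖²))^α · ‖z‖^(−2) is NOT integrable on the set {z ∈ ℂ : ‖z‖ > R} with respect to the two-dimensional Lebesgue measure on ℂ. -/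
open MeasureTheory

/-!
A polynomial of degree at least `N` satisfies `(1 + ‖z‖ ^ 2) ^ N = O(‖P z‖ ^ 2)` at infinity, so the
integrand dominates the radial function `log ‖z‖ ^ α * ‖z‖ ^ (-2)`. In polar coordinates the latter
becomes `r⁻¹ * log r ^ α`, which for `α ≥ -1` dominates the derivative `r⁻¹ * (log r)⁻¹` of the
unbounded function `log (log r)`.
-/

open Filter Asymptotics Bornology Set

lemma isBigO_rpow_rpow_atTop_of_le {a b : ℝ} (hab : a ≤ b) :
    (fun x : ℝ ↦ x ^ a) =O[atTop] fun x ↦ x ^ b := by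
  refine .of_bound' ?_
  filter_upwards [eventually_ge_atTop 1] with x hx
  rw [Real.norm_of_nonneg (by positivity), Real.norm_of_nonneg (by positivity)]
  exact Real.rpow_le_rpow_of_exponent_le hx hab

lemma isBigO_log_rpow_log_pow_rpow_atTop {k : ℕ} (hk : k ≠ 0) (α : ℝ) :
    (fun x : ℝ ↦ Real.log x ^ α) =O[atTop] fun x ↦ Real.log (x ^ k) ^ α := by
  have hk_rpow : (k : ℝ) ^ α ≠ 0 := by positivity
  refine (isBigO_const_mul_self ((k : ℝ) ^ α)⁻¹ _ _).congr' ?_ .rfl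
  filter_upwards [eventually_ge_atTop 1] with x hx
  rw [Real.log_pow, Real.mul_rpow k.cast_nonneg (Real.log_nonneg hx), inv_mul_cancel_left₀ hk_rpow]

lemma hasDerivAt_log_log {x : ℝ} (hx : 1 < x) :
    HasDerivAt (fun y ↦ Real.log (Real.log y)) (x⁻¹ * (Real.log x)⁻¹) x :=
  (Real.hasDerivAt_log (by positivity)).log (Real.log_pos hx).ne'

lemma not_integrableAtFilter_inv_mul_log_rpow_atTop {α : ℝ} (hα : -1 ≤ α) :
    ¬ IntegrableAtFilter (fun x : ℝ ↦ x⁻¹ * Real.log x ^ α) atTop volume := by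
  rintro ⟨s, hs, hf⟩
  have hderiv : ∀ᶠ x : ℝ in atTop,
      HasDerivAt (fun y ↦ Real.log (Real.log y)) (x⁻¹ * (Real.log x)⁻¹) x :=
    (eventually_gt_atTop 1).mono fun _ ↦ hasDerivAt_log_log
  have hunbounded : Tendsto (fun x ↦ ‖Real.log (Real.log x)‖) atTop atTop :=
    tendsto_norm_atTop_atTop.comp (Real.tendsto_log_atTop.comp Real.tendsto_log_atTop)
  have hlog : (fun x ↦ (Real.log x)⁻¹) =O[atTop] fun x ↦ Real.log x ^ α := by
    simpa only [Function.comp_def, Real.rpow_neg_one] using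
      (isBigO_rpow_rpow_atTop_of_le hα).comp_tendsto Real.tendsto_log_atTop
  refine not_integrableOn_of_tendsto_norm_atTop_of_deriv_isBigO_filter atTop hs
    (hderiv.mono fun _ h ↦ h.differentiableAt) hunbounded ?_ hf
  exact ((isBigO_refl _ _).mul hlog).congr' (hderiv.mono fun _ h ↦ h.deriv.symm) .rfl

section Radial

variable {E F : Type*} [NormedAddCommGroup E] [NormedSpace ℝ E] [FiniteDimensional ℝ E]
  [Nontrivial E] [MeasurableSpace E] [BorelSpace E] [NormedAddCommGroup F] [NormedSpace ℝ F]
  (μ : Measure E) [μ.IsAddHaarMeasure]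

lemma integrableOn_norm_preimage_fun_norm_addHaar {f : ℝ → F} {s : Set ℝ} (hs : MeasurableSet s) :
    IntegrableOn (fun x ↦ f ‖x‖) (norm ⁻¹' s) μ ↔
      IntegrableOn (fun r ↦ r ^ (Module.finrank ℝ E - 1) • f r) (s ∩ Ioi 0) := by
  rw [← integrable_indicator_iff (measurable_norm hs), ← integrableOn_indicator_iff hs,
    indicator_smul]
  exact integrable_fun_norm_addHaar μ (f := s.indicator f)

lemma integrableAtFilter_fun_norm_cobounded_iff {f : ℝ → F} :
    IntegrableAtFilter (fun x ↦ f ‖x‖) (cobounded E) μ ↔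
      IntegrableAtFilter (fun r ↦ r ^ (Module.finrank ℝ E - 1) • f r) atTop := by
  have hbasis := atTop_basis_Ioi' (0 : ℝ)
  have hbasis_norm := comap_norm_atTop (E := E) ▸ hbasis.comap norm
  rw [IntegrableAtFilter, hbasis_norm.exists_iff fun _ _ hst ht ↦ ht.mono_set hst,
    IntegrableAtFilter, hbasis.exists_iff fun _ _ hst ht ↦ ht.mono_set hst]
  refine exists_congr fun R ↦ and_congr_right fun hR ↦ ?_
  rw [integrableOn_norm_preimage_fun_norm_addHaar μ measurableSet_Ioi,
    inter_eq_left.2 (Ioi_subset_Ioi hR.le)]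

lemma not_integrableAtFilter_log_norm_rpow_mul_inv_norm_pow_finrank {α : ℝ} (hα : -1 ≤ α) :
    ¬ IntegrableAtFilter (fun x : E ↦ Real.log ‖x‖ ^ α * (‖x‖ ^ Module.finrank ℝ E)⁻¹)
      (cobounded E) μ := by
  rw [integrableAtFilter_fun_norm_cobounded_iff μ
    (f := fun r ↦ Real.log r ^ α * (r ^ Module.finrank ℝ E)⁻¹)]
  refine fun hf ↦ not_integrableAtFilter_inv_mul_log_rpow_atTop hα ?_
  refine IsBigO.integrableAtFilter (EventuallyEq.isBigO ?_)
    (Measurable.stronglyMeasurable (by fun_prop)).stronglyMeasurableAtFilter hf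
  filter_upwards [eventually_gt_atTop 0] with r hr
  obtain ⟨d, hd⟩ := Nat.exists_eq_succ_of_ne_zero (Module.finrank_pos (R := ℝ) (M := E)).ne'
  rw [hd, Nat.succ_sub_one, smul_eq_mul, pow_succ]
  field_simp

end Radial

lemma isBigO_one_add_norm_sq_pow_norm_eval_sq {𝕜 : Type*} [NormedField 𝕜]
    {P : Polynomial 𝕜} {N : ℕ} (hP : N ≤ P.degree) :
    (fun z ↦ (1 + ‖z‖ ^ 2) ^ N) =O[cobounded 𝕜] fun z ↦ ‖P.eval z‖ ^ 2 := by
  have hmonomial : (fun z ↦ z ^ N) =O[cobounded 𝕜] P.eval := by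
    simpa only [Polynomial.eval_pow, Polynomial.eval_X] using
      Polynomial.isBigO_cobounded_of_degree_le ((Polynomial.degree_X_pow_le N).trans hP)
  have hone : (fun _ ↦ (1 : ℝ)) =O[cobounded 𝕜] fun z ↦ ‖z‖ ^ 2 := by
    simpa only [one_pow, id] using
      ((isLittleO_const_id_cobounded (E'' := 𝕜) (1 : ℝ)).isBigO.norm_right (F' := 𝕜)).pow 2
  refine ((hone.add (isBigO_refl _ _)).pow N).trans ((hmonomial.norm_norm.pow 2).congr_left ?_)
  intro z
  rw [norm_pow, pow_right_comm]

theorem stmt_8_general (N : ℕ) (P : Polynomial ℂ) (hP : N ≤ P.degree) (α : ℝ) (hα : -1 ≤ α) :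
    ¬ IntegrableAtFilter
      (fun z : ℂ => ‖P.eval z‖ ^ 2 * (1 + ‖z‖ ^ 2) ^ (-(N : ℤ)) *
        Real.log (‖z‖ ^ 2) ^ α * ‖z‖ ^ (-2 : ℤ))
      (cobounded ℂ) volume := by
  have hpoly : (fun _ ↦ (1 : ℝ)) =O[cobounded ℂ]
      fun z ↦ ‖P.eval z‖ ^ 2 * (1 + ‖z‖ ^ 2) ^ (-(N : ℤ)) := by
    refine ((isBigO_one_add_norm_sq_pow_norm_eval_sq hP).mul (isBigO_refl _ _)).congr_left ?_
    intro z
    rw [zpow_neg, zpow_natCast, mul_inv_cancel₀ (by positivity)]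
  have hlog : (fun z : ℂ ↦ Real.log ‖z‖ ^ α) =O[cobounded ℂ] fun z ↦ Real.log (‖z‖ ^ 2) ^ α :=
    (isBigO_log_rpow_log_pow_rpow_atTop two_ne_zero α).comp_tendsto tendsto_norm_cobounded_atTop
  have : (cobounded ℂ).IsMeasurablyGenerated :=
    Metric.cobounded_eq_cocompact (α := ℂ) ▸ inferInstance
  refine fun hf ↦
    not_integrableAtFilter_log_norm_rpow_mul_inv_norm_pow_finrank (E := ℂ) volume hα ?_
  refine IsBigO.integrableAtFilter ?_
    (Measurable.stronglyMeasurable (by fun_prop)).stronglyMeasurableAtFilter hf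
  refine ((hpoly.mul hlog).mul (isBigO_refl _ _)).congr_left fun z ↦ ?_
  rw [one_mul, Complex.finrank_real_complex, zpow_neg, zpow_ofNat]

/-- Polynomials of degree exactly `N` fail to be square integrable near infinity for the
generalized Poincaré metric, for any exponent `α ≥ -1` of the logarithmic factor. -/
theorem stmt_8 (N : ℕ) (hN : 1 ≤ N) (P : Polynomial ℂ) (hP : P.degree = (N : ℕ))
    (α : ℝ) (hα : -1 ≤ α) (R : ℝ) (hR : 2 ≤ R) :
    ¬ IntegrableOn
      (fun z : ℂ => ‖P.eval z‖ ^ 2 * (1 + ‖z‖ ^ 2) ^ (-(N : ℤ)) *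
        Real.log (‖z‖ ^ 2) ^ α * ‖z‖ ^ (-2 : ℤ))
      {z : ℂ | R < ‖z‖} volume := fun hf ↦
  stmt_8_general N P hP.ge α hα
    ⟨_, tendsto_norm_cobounded_atTop.eventually_gt_atTop R, hf⟩
end
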